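/- Define the rational functions of s ∈ ℂ: t(s) = 2s³(s²−5)/((s−2)²(s+3)³) and y(s) = s²(s−1)/(3(s−2)(s+3)). Then for every s ∈ ℂ such that s ≠ 2, s ≠ −3, t'(s) ≠ 0, t(s) ∉ {0,1}, and y(s) ∉ {0, 1, t(s)}, the pair (t, y) is a parametric solution of the sixth Painlevé equation PVI(α,β,γ,δ) at s with θ-tuple (θ₀, θ₁, θ_t, θ_∞) = (1/5, 2/5, 1/5, 2/5), i.e. α = 9/50, β = −1/50, γ = 2/25, δ = 12/25. -/

import Mathlib

noncomputable def tFun15 : ℂ → ℂ := fun s => 2*s^3*(s^2-5)/((s-2)^2*(s+3)^3)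

noncomputable def yFun15 : ℂ → ℂ := fun s => s^2*(s-1)/(3*(s-2)*(s+3))

/-!
The map `t` ramifies only over `0`, `1` and `∞`: the zeros of `dt/ds` are `0`, `-2` and `3`, where
`t` is `0`, `1` and `1`. The functions `y`, `y - 1` and `y - t` factor just as completely, so all
zeros and poles of `t`, `t - 1`, `y`, `y - 1`, `y - t` and `dt/ds` lie in `0, ±1, ±2, ±3, ±√5`, and
away from these points both sides of the Painlevé equation reduce to the same rational function
of `s`.
-/

/-- The right-hand side of the sixth Painlevé equation `PVI(α, β, γ, δ)` at the point `t`, as a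
function of the value `y` and the slope `p = dy/dt`. It agrees with the usual formula where
`t ≠ 0, 1` and `y ≠ 0, 1, t`, and takes junk values elsewhere. -/
def painleveVIRhs {K : Type*} [Field K] (α β γ δ t y p : K) : K :=
  (1 / 2) * (1 / y + 1 / (y - 1) + 1 / (y - t)) * p ^ 2
    - (1 / t + 1 / (t - 1) + 1 / (y - t)) * p
    + (y * (y - 1) * (y - t) / (t ^ 2 * (t - 1) ^ 2)) *
      (α + β * t / y ^ 2 + γ * (t - 1) / (y - 1) ^ 2 + δ * t * (t - 1) / (y - t) ^ 2)

/-- The slope `dy/dt` of the curve `s ↦ (tFun15 s, yFun15 s)`, as a rational function of `s` in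
lowest terms. -/
noncomputable def slope15 (s : ℂ) : ℂ :=
  (s ^ 2 + 5 * s - 4) * (s - 2) * (s + 3) ^ 2 / (30 * s * (s + 2) * (s - 3))

section

variable {s : ℂ}

lemma tFun15_sub_one (hsub2 : s - 2 ≠ 0) (hadd3 : s + 3 ≠ 0) :
    tFun15 s - 1 = (s + 2) ^ 2 * (s - 3) ^ 3 / ((s - 2) ^ 2 * (s + 3) ^ 3) := by
  unfold tFun15
  field_simp
  ring

lemma yFun15_sub_one (hsub2 : s - 2 ≠ 0) (hadd3 : s + 3 ≠ 0) :
    yFun15 s - 1 = (s + 2) * (s - 3) ^ 2 / (3 * (s - 2) * (s + 3)) := by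
  unfold yFun15
  field_simp
  ring

lemma yFun15_sub_tFun15 (s : ℂ) :
    yFun15 s - tFun15 s =
      s ^ 2 * (s + 1) * (s + 2) * (s - 3) ^ 2 / (3 * (s - 2) ^ 2 * (s + 3) ^ 3) := by
  unfold yFun15 tFun15
  field_simp
  ring

lemma tFun15_ne_zero_iff (hsub2 : s - 2 ≠ 0) (hadd3 : s + 3 ≠ 0) :
    tFun15 s ≠ 0 ↔ s ≠ 0 ∧ s ^ 2 - 5 ≠ 0 := by
  simp [tFun15, hsub2, hadd3]

lemma tFun15_ne_one_iff (hsub2 : s - 2 ≠ 0) (hadd3 : s + 3 ≠ 0) :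
    tFun15 s ≠ 1 ↔ s + 2 ≠ 0 ∧ s - 3 ≠ 0 := by
  rw [← sub_ne_zero, tFun15_sub_one hsub2 hadd3]
  simp [hsub2, hadd3]

lemma yFun15_ne_zero_iff (hsub2 : s - 2 ≠ 0) (hadd3 : s + 3 ≠ 0) :
    yFun15 s ≠ 0 ↔ s ≠ 0 ∧ s - 1 ≠ 0 := by
  simp [yFun15, hsub2, hadd3]

lemma yFun15_ne_tFun15_iff (hsub2 : s - 2 ≠ 0) (hadd3 : s + 3 ≠ 0) :
    yFun15 s ≠ tFun15 s ↔ s ≠ 0 ∧ s + 1 ≠ 0 ∧ s + 2 ≠ 0 ∧ s - 3 ≠ 0 := by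
  rw [← sub_ne_zero, yFun15_sub_tFun15]
  simp [hsub2, hadd3, and_assoc]

lemma hasDerivAt_tFun15 (hsub2 : s - 2 ≠ 0) (hadd3 : s + 3 ≠ 0) :
    HasDerivAt tFun15 (10 * s ^ 2 * (s + 2) * (s - 3) ^ 2 / ((s - 2) ^ 3 * (s + 3) ^ 4)) s := by
  have hid := hasDerivAt_id' s
  have hnum := ((hid.fun_pow 3).const_mul 2).fun_mul ((hid.fun_pow 2).sub_const 5)
  have hden := ((hid.sub_const 2).fun_pow 2).fun_mul ((hid.add_const 3).fun_pow 3)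
  refine (hnum.fun_div hden (by simp [hsub2, hadd3])).congr_deriv ?_
  field_simp
  ring

lemma hasDerivAt_yFun15 (hsub2 : s - 2 ≠ 0) (hadd3 : s + 3 ≠ 0) :
    HasDerivAt yFun15 (s * (s - 3) * (s ^ 2 + 5 * s - 4) / (3 * (s - 2) ^ 2 * (s + 3) ^ 2)) s := by
  have hid := hasDerivAt_id' s
  have hnum := (hid.fun_pow 2).fun_mul (hid.sub_const 1)
  have hden := ((hid.sub_const 2).const_mul 3).fun_mul (hid.add_const 3)
  refine (hnum.fun_div hden (by simp [hsub2, hadd3])).congr_deriv ?_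
  field_simp
  ring

lemma deriv_yFun15_div_deriv_tFun15_eq_slope15 (hsub2 : s - 2 ≠ 0) (hadd3 : s + 3 ≠ 0) :
    deriv yFun15 s / deriv tFun15 s = slope15 s := by
  rw [(hasDerivAt_yFun15 hsub2 hadd3).deriv, (hasDerivAt_tFun15 hsub2 hadd3).deriv, slope15]
  field_simp
  ring

lemma hasDerivAt_slope15 (hs0 : s ≠ 0) (hadd2 : s + 2 ≠ 0) (hsub3 : s - 3 ≠ 0) :
    HasDerivAt slope15
      ((s + 3) * (s ^ 6 - 21 * s ^ 4 + 72) / (15 * s ^ 2 * (s + 2) ^ 2 * (s - 3) ^ 2)) s := by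
  have hid := hasDerivAt_id' s
  have hnum := ((((hid.fun_pow 2).fun_add (hid.const_mul 5)).sub_const 4).fun_mul
    (hid.sub_const 2)).fun_mul ((hid.add_const 3).fun_pow 2)
  have hden := ((hid.const_mul 30).fun_mul (hid.add_const 2)).fun_mul (hid.sub_const 3)
  refine (hnum.fun_div hden (by simp [hs0, hadd2, hsub3])).congr_deriv ?_
  field_simp
  ring

lemma hasDerivAt_deriv_yFun15_div_deriv_tFun15 (hs0 : s ≠ 0) (hsub2 : s - 2 ≠ 0)
    (hadd3 : s + 3 ≠ 0) (hadd2 : s + 2 ≠ 0) (hsub3 : s - 3 ≠ 0) :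
    HasDerivAt (fun u => deriv yFun15 u / deriv tFun15 u)
      ((s + 3) * (s ^ 6 - 21 * s ^ 4 + 72) / (15 * s ^ 2 * (s + 2) ^ 2 * (s - 3) ^ 2)) s := by
  refine (hasDerivAt_slope15 hs0 hadd2 hsub3).congr_of_eventuallyEq ?_
  have eventually_sub_two_ne : ∀ᶠ u in nhds s, u - 2 ≠ 0 :=
    ContinuousAt.eventually_ne (by fun_prop) hsub2
  have eventually_add_three_ne : ∀ᶠ u in nhds s, u + 3 ≠ 0 :=
    ContinuousAt.eventually_ne (by fun_prop) hadd3
  filter_upwards [eventually_sub_two_ne, eventually_add_three_ne] with u husub2 huadd3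
  exact deriv_yFun15_div_deriv_tFun15_eq_slope15 husub2 huadd3

lemma painleveVI_slope_sq_coeff (hs0 : s ≠ 0) (hsub1 : s - 1 ≠ 0) (hadd1 : s + 1 ≠ 0)
    (hsub2 : s - 2 ≠ 0) (hadd3 : s + 3 ≠ 0) (hadd2 : s + 2 ≠ 0) (hsub3 : s - 3 ≠ 0) :
    1 / yFun15 s + 1 / (yFun15 s - 1) + 1 / (yFun15 s - tFun15 s) =
      9 * (s - 2) * (s + 3) * (s ^ 4 - 5 * s ^ 2 + 12) /
        (s ^ 2 * (s - 1) * (s + 1) * (s + 2) * (s - 3) ^ 2) := by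
  rw [yFun15_sub_one hsub2 hadd3, yFun15_sub_tFun15, yFun15]
  field_simp
  ring

lemma painleveVI_slope_coeff (hs0 : s ≠ 0) (hadd1 : s + 1 ≠ 0) (hsub2 : s - 2 ≠ 0)
    (hadd3 : s + 3 ≠ 0) (hadd2 : s + 2 ≠ 0) (hsub3 : s - 3 ≠ 0) (hsq5 : s ^ 2 - 5 ≠ 0) :
    1 / tFun15 s + 1 / (tFun15 s - 1) + 1 / (yFun15 s - tFun15 s) =
      (s - 2) ^ 2 * (s + 3) ^ 3 *
          (3 * s ^ 6 + 4 * s ^ 5 - 26 * s ^ 4 - 36 * s ^ 3 + 75 * s ^ 2 + 72 * s - 108) /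
        (2 * s ^ 3 * (s ^ 2 - 5) * (s + 1) * (s + 2) ^ 2 * (s - 3) ^ 3) := by
  rw [tFun15_sub_one hsub2 hadd3, yFun15_sub_tFun15, tFun15]
  field_simp
  ring

lemma painleveVI_prefactor (hsub2 : s - 2 ≠ 0) (hadd3 : s + 3 ≠ 0) :
    yFun15 s * (yFun15 s - 1) * (yFun15 s - tFun15 s) / (tFun15 s ^ 2 * (tFun15 s - 1) ^ 2) =
      (s - 1) * (s + 1) * (s - 2) ^ 4 * (s + 3) ^ 7 /
        (108 * s ^ 2 * (s ^ 2 - 5) ^ 2 * (s + 2) ^ 2 * (s - 3) ^ 2) := by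
  rw [tFun15_sub_one hsub2 hadd3, yFun15_sub_one hsub2 hadd3, yFun15_sub_tFun15, tFun15, yFun15]
  field_simp
  ring

lemma tFun15_div_yFun15_sq (hsub2 : s - 2 ≠ 0) :
    tFun15 s / yFun15 s ^ 2 = 18 * (s ^ 2 - 5) / (s * (s - 1) ^ 2 * (s + 3)) := by
  unfold tFun15 yFun15
  field_simp
  ring

lemma tFun15_sub_one_div_yFun15_sub_one_sq (hsub2 : s - 2 ≠ 0) (hadd3 : s + 3 ≠ 0)
    (hadd2 : s + 2 ≠ 0) :
    (tFun15 s - 1) / (yFun15 s - 1) ^ 2 = 9 / ((s - 3) * (s + 3)) := by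
  rw [tFun15_sub_one hsub2 hadd3, yFun15_sub_one hsub2 hadd3]
  field_simp
  ring

lemma tFun15_mul_sub_one_div_yFun15_sub_tFun15_sq (hsub2 : s - 2 ≠ 0)
    (hadd3 : s + 3 ≠ 0) (hadd2 : s + 2 ≠ 0) :
    tFun15 s * (tFun15 s - 1) / (yFun15 s - tFun15 s) ^ 2 =
      18 * (s ^ 2 - 5) / (s * (s + 1) ^ 2 * (s - 3)) := by
  rw [tFun15_sub_one hsub2 hadd3, yFun15_sub_tFun15, tFun15]
  field_simp
  ring

lemma painleveVIRhs_tFun15_yFun15 (hs0 : s ≠ 0) (hsub1 : s - 1 ≠ 0) (hadd1 : s + 1 ≠ 0)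
    (hsub2 : s - 2 ≠ 0) (hadd3 : s + 3 ≠ 0) (hadd2 : s + 2 ≠ 0) (hsub3 : s - 3 ≠ 0)
    (hsq5 : s ^ 2 - 5 ≠ 0) :
    painleveVIRhs (9 / 50) (-1 / 50) (2 / 25) (12 / 25) (tFun15 s) (yFun15 s) (slope15 s) =
      (s - 2) ^ 3 * (s + 3) ^ 5 * (s ^ 6 - 21 * s ^ 4 + 72) /
        (150 * s ^ 4 * (s + 2) ^ 3 * (s - 3) ^ 4) := by
  rw [painleveVIRhs, slope15,
    painleveVI_slope_sq_coeff hs0 hsub1 hadd1 hsub2 hadd3 hadd2 hsub3,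
    painleveVI_slope_coeff hs0 hadd1 hsub2 hadd3 hadd2 hsub3 hsq5,
    painleveVI_prefactor hsub2 hadd3, mul_assoc (12 / 25),
    mul_div_assoc (-1 / 50), mul_div_assoc (2 / 25), mul_div_assoc (12 / 25),
    tFun15_div_yFun15_sq hsub2,
    tFun15_sub_one_div_yFun15_sub_one_sq hsub2 hadd3 hadd2,
    tFun15_mul_sub_one_div_yFun15_sub_tFun15_sq hsub2 hadd3 hadd2]
  field_simp
  ring

end

/-- Parametric algebraic solution of the sixth Painlevé equation. -/
theorem stmt_15 (s : ℂ)
    (h1 : s ≠ 2)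
    (h2 : s ≠ -3)
    (hdt : deriv tFun15 s ≠ 0)
    (ht0 : tFun15 s ≠ 0) (ht1 : tFun15 s ≠ 1)
    (hy0 : yFun15 s ≠ 0) (hy1 : yFun15 s ≠ 1) (hyt : yFun15 s ≠ tFun15 s) :
    deriv (fun u => deriv yFun15 u / deriv tFun15 u) s / deriv tFun15 s =
      (1/2) * (1/(yFun15 s) + 1/(yFun15 s - 1) + 1/(yFun15 s - tFun15 s)) *
          (deriv yFun15 s / deriv tFun15 s)^2
        - (1/(tFun15 s) + 1/(tFun15 s - 1) + 1/(yFun15 s - tFun15 s)) *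
          (deriv yFun15 s / deriv tFun15 s)
        + (yFun15 s * (yFun15 s - 1) * (yFun15 s - tFun15 s) /
            ((tFun15 s)^2 * (tFun15 s - 1)^2)) *
          ((9/50 : ℂ) + (-1/50 : ℂ) * tFun15 s / (yFun15 s)^2
            + (2/25 : ℂ) * (tFun15 s - 1) / (yFun15 s - 1)^2
            + (12/25 : ℂ) * tFun15 s * (tFun15 s - 1) / (yFun15 s - tFun15 s)^2) := by
  have hsub2 : s - 2 ≠ 0 := sub_ne_zero.mpr h1
  have hadd3 : s + 3 ≠ 0 := fun h => h2 (eq_neg_of_add_eq_zero_left h)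
  obtain ⟨hs0, hsq5⟩ := (tFun15_ne_zero_iff hsub2 hadd3).mp ht0
  obtain ⟨hadd2, hsub3⟩ := (tFun15_ne_one_iff hsub2 hadd3).mp ht1
  have hsub1 : s - 1 ≠ 0 := ((yFun15_ne_zero_iff hsub2 hadd3).mp hy0).2
  have hadd1 : s + 1 ≠ 0 := ((yFun15_ne_tFun15_iff hsub2 hadd3).mp hyt).2.1
  change _ = painleveVIRhs (9 / 50) (-1 / 50) (2 / 25) (12 / 25) (tFun15 s) (yFun15 s)
    (deriv yFun15 s / deriv tFun15 s)
  rw [deriv_yFun15_div_deriv_tFun15_eq_slope15 hsub2 hadd3,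
    painleveVIRhs_tFun15_yFun15 hs0 hsub1 hadd1 hsub2 hadd3 hadd2 hsub3 hsq5,
    (hasDerivAt_deriv_yFun15_div_deriv_tFun15 hs0 hsub2 hadd3 hadd2 hsub3).deriv,
    (hasDerivAt_tFun15 hsub2 hadd3).deriv]
  field_simp
  ring
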